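/- arXiv:2002.09657 — 2 statements merged into one kernel-verified Lean document; each statement's English description precedes it below -/
import Mathlib

section
/- For every q with 0 < q < 1 and every natural number k, there exists a constant E_k > 0 (depending on q and k) such that for all natural numbers r, s, a with k ≤ r and 0 ≤ a ≤ min(r - k, s), one has |1 - Q_q(r,s,a) / Q_q(r-k,s,a)| ≤ E_k · q^{2(r-a)}. (This is Lemma 7.1 of the paper, controlling the ratio (κ_{t-k}^{r-k,s} / κ_t^{r,s})² = Q_q(r,s,a)/Q_q(r-k,s,a).) -/
/-- The `q`-integer `[n]_q = (q^{-n} - q^n)/(q^{-1} - q)`. -/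
noncomputable def qInt (q : ℝ) (n : ℕ) : ℝ := ((q⁻¹) ^ n - q ^ n) / (q⁻¹ - q)

/-- The `q`-factorial `[n]_q! = [n]_q [n-1]_q ⋯ [1]_q`, with `[0]_q! = 1`. -/
noncomputable def qFact (q : ℝ) (n : ℕ) : ℝ := ∏ i ∈ Finset.range n, qInt q (i + 1)

/-- `Q_q(r,s,a) = [a]_q!·[r-a]_q!·[s-a]_q!·[t+a+1]_q! / ([r]_q!·[s]_q!·[t+1]_q!)`,
where `t = r + s - 2a`; this is `(κ_t^{r,s})^{-2}` in the paper. -/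
noncomputable def Qq (q : ℝ) (r s a : ℕ) : ℝ :=
  qFact q a * qFact q (r - a) * qFact q (s - a) * qFact q (r + s - 2 * a + a + 1) /
    (qFact q r * qFact q s * qFact q (r + s - 2 * a + 1))

lemma qInt_eq (q : ℝ) (hq0 : 0 < q) (n : ℕ) :
    qInt q n = (1 - (q ^ 2) ^ n) * (q ^ n * (q⁻¹ - q))⁻¹ := by
  have h : q ^ n ≠ 0 := by positivity
  have e : (q⁻¹) ^ n - q ^ n = (1 - (q ^ 2) ^ n) * (q ^ n)⁻¹ := by
    rw [inv_pow, ← pow_mul, mul_comm 2 n, pow_mul]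
    field_simp
  unfold qInt
  rw [e, mul_inv, div_eq_mul_inv, mul_assoc]

lemma inv_sub_pos (q : ℝ) (hq0 : 0 < q) (hq1 : q < 1) : 0 < q⁻¹ - q := by
  have := (one_lt_inv₀ hq0).2 hq1
  linarith

lemma qInt_pos (q : ℝ) (hq0 : 0 < q) (hq1 : q < 1) (n : ℕ) : 0 < qInt q (n + 1) := by
  rw [qInt_eq q hq0]
  have h1 := inv_sub_pos q hq0 hq1
  have h2 : (q ^ 2) ^ (n + 1) < 1 := pow_lt_one₀ (by positivity) (by nlinarith) (by omega)
  have h3 : 0 < 1 - (q ^ 2) ^ (n + 1) := by linarith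
  positivity

lemma qFact_pos (q : ℝ) (hq0 : 0 < q) (hq1 : q < 1) (n : ℕ) : 0 < qFact q n :=
  Finset.prod_pos fun i _ => qInt_pos q hq0 hq1 i

lemma qFact_succ (q : ℝ) (n : ℕ) : qFact q (n + 1) = qFact q n * qInt q (n + 1) := by
  unfold qFact
  rw [Finset.prod_range_succ]

lemma Qq_eq (q : ℝ) (m a b : ℕ) : Qq q (m + a) (a + b) a =
    qFact q a * qFact q m * qFact q b * qFact q (m + b + a + 1) /
    (qFact q (m + a) * qFact q (a + b) * qFact q (m + b + 1)) := by
  unfold Qq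
  have h1 : m + a - a = m := by omega
  have h2 : a + b - a = b := by omega
  have h3 : m + a + (a + b) - 2 * a = m + b := by omega
  rw [h1, h2, h3]

lemma Qq_pos (q : ℝ) (hq0 : 0 < q) (hq1 : q < 1) (m a b : ℕ) :
    0 < Qq q (m + a) (a + b) a := by
  rw [Qq_eq]
  have := qFact_pos q hq0 hq1
  have h1 := this a
  have h2 := this m
  have h3 := this b
  have h4 := this (m + b + a + 1)
  have h5 := this (m + a)
  have h6 := this (a + b)
  have h7 := this (m + b + 1)
  positivity

lemma Qq_step (q : ℝ) (hq0 : 0 < q) (hq1 : q < 1) (m a b : ℕ) :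
    Qq q (m + 1 + a) (a + b) a = Qq q (m + a) (a + b) a *
      (qInt q (m + 1) * qInt q (m + b + a + 2) / (qInt q (m + a + 1) * qInt q (m + b + 2))) := by
  rw [Qq_eq, Qq_eq]
  have e1 : m + 1 + b + a + 1 = (m + b + a + 1) + 1 := by ring
  have e2 : m + 1 + a = (m + a) + 1 := by ring
  have e3 : m + 1 + b + 1 = (m + b + 1) + 1 := by ring
  rw [e1, e2, e3, qFact_succ, qFact_succ, qFact_succ q (m + a), qFact_succ q (m + b + 1)]
  have h5 := (qFact_pos q hq0 hq1 (m + a)).ne'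
  have h6 := (qFact_pos q hq0 hq1 (a + b)).ne'
  have h7 := (qFact_pos q hq0 hq1 (m + b + 1)).ne'
  have h8 := (qInt_pos q hq0 hq1 (m + a)).ne'
  have h9 := (qInt_pos q hq0 hq1 (m + b + 1)).ne'
  simp only [add_assoc, Nat.reduceAdd] at *
  field_simp

lemma step_eq (q : ℝ) (hq0 : 0 < q) (hq1 : q < 1) (m a b : ℕ) :
    qInt q (m + 1) * qInt q (m + b + a + 2) / (qInt q (m + a + 1) * qInt q (m + b + 2)) =
    (1 - (q ^ 2) ^ (m + 1)) * (1 - (q ^ 2) ^ (m + b + a + 2)) /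
      ((1 - (q ^ 2) ^ (m + a + 1)) * (1 - (q ^ 2) ^ (m + b + 2))) := by
  simp only [qInt_eq q hq0]
  have h1 := (inv_sub_pos q hq0 hq1).ne'
  generalize q⁻¹ - q = d at *
  have e : (q ^ (m + 1) * d)⁻¹ * (q ^ (m + b + a + 2) * d)⁻¹ =
      (q ^ (m + a + 1) * d)⁻¹ * (q ^ (m + b + 2) * d)⁻¹ := by
    rw [← mul_inv, ← mul_inv]
    congr 1
    ring
  rw [mul_mul_mul_comm, e, mul_mul_mul_comm (1 - (q ^ 2) ^ (m + a + 1))]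
  apply mul_div_mul_right
  positivity

lemma step_bound (p : ℝ) (hp0 : 0 < p) (hp1 : p < 1) (m a b : ℕ) :
    0 ≤ (1 - p ^ (m + 1)) * (1 - p ^ (m + b + a + 2)) /
      ((1 - p ^ (m + a + 1)) * (1 - p ^ (m + b + 2))) ∧
    (1 - p ^ (m + 1)) * (1 - p ^ (m + b + a + 2)) /
      ((1 - p ^ (m + a + 1)) * (1 - p ^ (m + b + 2))) ≤ 1 ∧
    1 - (1 - p ^ (m + 1)) * (1 - p ^ (m + b + a + 2)) /
      ((1 - p ^ (m + a + 1)) * (1 - p ^ (m + b + 2))) ≤ ((1 - p) ^ 2)⁻¹ * p ^ m := by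
  have key : ∀ n : ℕ, 1 - p ≤ 1 - p ^ (n + 1) := fun n => by
    have := pow_le_of_le_one hp0.le hp1.le (Nat.succ_ne_zero n)
    exact sub_le_sub_left this 1
  have hp : 0 < 1 - p := by linarith
  have k1 := key m
  have k2 := key (m + b + a + 1)
  have k3 := key (m + a)
  have k4 := key (m + b + 1)
  have hD : (1 - p) ^ 2 ≤ (1 - p ^ (m + a + 1)) * (1 - p ^ (m + b + 2)) := by
    rw [sq]
    exact mul_le_mul k3 k4 hp.le (by linarith)
  have hD0 : 0 < (1 - p ^ (m + a + 1)) * (1 - p ^ (m + b + 2)) := lt_of_lt_of_le (by positivity) hD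
  have hN : 0 ≤ (1 - p ^ (m + 1)) * (1 - p ^ (m + b + a + 2)) :=
    mul_nonneg (by linarith) (by linarith)
  have hdiff : (1 - p ^ (m + a + 1)) * (1 - p ^ (m + b + 2)) -
      (1 - p ^ (m + 1)) * (1 - p ^ (m + b + a + 2)) =
      p ^ m * (p * (1 - p ^ a) * (1 - p ^ (b + 1))) := by ring
  have ha0 : 0 ≤ 1 - p ^ a := by linarith [pow_le_one₀ (n := a) hp0.le hp1.le]
  have ha1 : 1 - p ^ a ≤ 1 := by linarith [pow_pos hp0 a]
  have hb0 : 0 ≤ 1 - p ^ (b + 1) := by linarith [key b]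
  have hb1 : 1 - p ^ (b + 1) ≤ 1 := by linarith [pow_pos hp0 (b + 1)]
  have hc0 : 0 ≤ p * (1 - p ^ a) * (1 - p ^ (b + 1)) := by positivity
  have hc1 : p * (1 - p ^ a) * (1 - p ^ (b + 1)) ≤ 1 :=
    mul_le_one₀ (mul_le_one₀ hp1.le ha0 ha1) hb0 hb1
  have hm : 0 < p ^ m := by positivity
  refine ⟨by positivity, ?_, ?_⟩
  · rw [div_le_one hD0]
    nlinarith [mul_nonneg hm.le hc0]
  · rw [one_sub_div hD0.ne', hdiff, div_eq_mul_inv, mul_comm]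
    exact mul_le_mul (inv_anti₀ (by positivity) hD) (by nlinarith) (by positivity) (by positivity)

lemma ratio_bound (q : ℝ) (hq0 : 0 < q) (hq1 : q < 1) (m a b k : ℕ) :
    0 ≤ Qq q (m + k + a) (a + b) a / Qq q (m + a) (a + b) a ∧
    Qq q (m + k + a) (a + b) a / Qq q (m + a) (a + b) a ≤ 1 ∧
    1 - Qq q (m + k + a) (a + b) a / Qq q (m + a) (a + b) a ≤
      k * (((1 - q ^ 2) ^ 2)⁻¹ * (q ^ 2) ^ m) := by
  have hp0 : 0 < q ^ 2 := by positivity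
  have hp1 : q ^ 2 < 1 := by nlinarith
  induction k with
  | zero => simp [div_self (Qq_pos q hq0 hq1 m a b).ne']
  | succ k ih =>
    obtain ⟨i0, i1, i2⟩ := ih
    obtain ⟨s0, s1, s2⟩ := step_bound (q ^ 2) hp0 hp1 (m + k) a b
    rw [← add_assoc m k 1, Qq_step q hq0 hq1, step_eq q hq0 hq1, mul_div_right_comm]
    generalize Qq q (m + k + a) (a + b) a / Qq q (m + a) (a + b) a = R at *
    generalize (1 - (q ^ 2) ^ (m + k + 1)) * (1 - (q ^ 2) ^ (m + k + b + a + 2)) /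
      ((1 - (q ^ 2) ^ (m + k + a + 1)) * (1 - (q ^ 2) ^ (m + k + b + 2))) = x at *
    have h : ((1 - q ^ 2) ^ 2)⁻¹ * (q ^ 2) ^ (m + k) ≤ ((1 - q ^ 2) ^ 2)⁻¹ * (q ^ 2) ^ m :=
      mul_le_mul_of_nonneg_left (pow_le_pow_of_le_one hp0.le hp1.le (by omega)) (by positivity)
    refine ⟨mul_nonneg i0 s0, mul_le_one₀ i1 s0 s1, ?_⟩
    push_cast
    nlinarith [mul_nonneg (sub_nonneg.2 i1) (sub_nonneg.2 s1)]

theorem kappa_ratio_estimate (q : ℝ) (hq0 : 0 < q) (hq1 : q < 1) (k : ℕ) :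
    ∃ E : ℝ, 0 < E ∧ ∀ r s a : ℕ, k ≤ r → a ≤ min (r - k) s →
      |1 - Qq q r s a / Qq q (r - k) s a| ≤ E * q ^ (2 * (r - a)) := by
  have hp1 : 0 < 1 - q ^ 2 := by nlinarith
  refine ⟨(k + 1) * ((1 - q ^ 2) ^ 2)⁻¹ * ((q ^ 2) ^ k)⁻¹, by positivity, ?_⟩
  intro r s a hk ha
  obtain ⟨ha1, ha2⟩ := le_min_iff.1 ha
  obtain ⟨b, rfl⟩ := Nat.exists_eq_add_of_le ha2
  obtain ⟨m, rfl⟩ : ∃ m, r = m + k + a := ⟨r - k - a, by omega⟩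
  have e1 : m + k + a - k = m + a := by omega
  have e2 : m + k + a - a = m + k := by omega
  obtain ⟨h0, h1, h2⟩ := ratio_bound q hq0 hq1 m a b k
  rw [e1, e2, abs_of_nonneg (by linarith), pow_mul, pow_add]
  have e3 : (k + 1) * ((1 - q ^ 2) ^ 2)⁻¹ * ((q ^ 2) ^ k)⁻¹ * ((q ^ 2) ^ m * (q ^ 2) ^ k) =
      (k + 1) * (((1 - q ^ 2) ^ 2)⁻¹ * (q ^ 2) ^ m) := by
    have : (q ^ 2) ^ k ≠ 0 := by positivity
    field_simp
  rw [e3]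
  have : 0 < ((1 - q ^ 2) ^ 2)⁻¹ * (q ^ 2) ^ m := by positivity
  linarith
end

section
/- Let N ≥ 3, let F ∈ M_N(ℂ) be a positive definite Hermitian matrix whose spectrum is symmetric (there is a unitary U with U F U^* = F^{-1}), and let q ∈ (0,1] satisfy q + q^{-1} = Tr(F). Then q^{-1} > ‖F‖, i.e. q · ‖F‖ < 1. (In the paper this is the key fact that q‖F₁‖ < 1 for the free orthogonal quantum group O_Q^+ with N ≥ 3, where F₁ = ᵗ(Q^*Q) is normalized by Tr(F₁) = Tr(F₁^{-1}) and q + q^{-1} = Tr(F₁).) -/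
open Matrix
open scoped ComplexOrder

/-- The operator norm of a complex matrix acting on `ℓ²(ℂ^N)`. -/
noncomputable def matOpNorm {N : ℕ} (F : Matrix (Fin N) (Fin N) ℂ) : ℝ :=
  ‖Matrix.toEuclideanCLM (𝕜 := ℂ) F‖

open scoped Matrix.Norms.L2Operator in
lemma matOpNorm_lt {N : ℕ} {F : Matrix (Fin N) (Fin N) ℂ} (hF : F.IsHermitian) {r : ℝ}
    (hr : 0 < r) (h : ∀ i, |hF.eigenvalues i| < r) : matOpNorm F < r := by
  have h1 : matOpNorm F = ‖F‖ := rfl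
  rw [h1, hF.spectral_theorem, Unitary.conjStarAlgAut_apply,
    CStarRing.norm_mul_mem_unitary _ (Unitary.star_mem hF.eigenvectorUnitary.2),
    CStarRing.norm_coe_unitary_mul, Matrix.l2_opNorm_diagonal, pi_norm_lt_iff hr]
  intro i
  simpa using h i

lemma exists_inv_eigenvalue {N : ℕ} {F : Matrix (Fin N) (Fin N) ℂ} (hF : F.PosDef)
    (hsym : ∃ U ∈ Matrix.unitaryGroup (Fin N) ℂ, U * F * Uᴴ = F⁻¹) (i : Fin N) :
    ∃ j, hF.1.eigenvalues j = (hF.1.eigenvalues i)⁻¹ := by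
  obtain ⟨U, hU, h⟩ := hsym
  have hs : spectrum ℝ F⁻¹ = spectrum ℝ F := by
    rw [← h]
    exact Unitary.spectrum_star_right_conjugate (U := ⟨U, hU⟩)
  have hi : hF.1.eigenvalues i ∈ spectrum ℝ F := by
    rw [hF.1.spectrum_real_eq_range_eigenvalues]; exact ⟨i, rfl⟩
  obtain ⟨a, rfl⟩ := hF.isUnit
  rw [← spectrum.inv₀_mem_inv_iff, Matrix.coe_units_inv, hs,
    hF.1.spectrum_real_eq_range_eigenvalues] at hi
  exact hi

lemma sum_aux {N : ℕ} (hN : 3 ≤ N) (l : Fin N → ℝ) (hl : ∀ i, 0 < l i) {i j : Fin N}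
    (hij : i ≠ j) : l i + l j < ∑ k, l k := by
  rw [← Finset.sum_pair hij]
  obtain ⟨k, hk⟩ : ∃ k, k ∉ ({i, j} : Finset (Fin N)) := by
    by_contra! hc
    have h1 := Finset.card_le_card (fun x _ => hc x : (Finset.univ : Finset (Fin N)) ⊆ {i, j})
    have h2 := Finset.card_le_two (a := i) (b := j)
    simp only [Finset.card_univ, Fintype.card_fin] at h1
    omega
  exact Finset.sum_lt_sum_of_subset (Finset.subset_univ _) (Finset.mem_univ k) hk (hl k)
    (fun x _ _ => (hl x).le)

lemma real_aux {N : ℕ} (hN : 3 ≤ N) (l : Fin N → ℝ) (hl : ∀ i, 0 < l i)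
    (hs : ∀ i, ∃ j, l j = (l i)⁻¹) (q : ℝ) (hq0 : 0 < q) (hq1 : q ≤ 1)
    (htr : q + q⁻¹ = ∑ k, l k) (i : Fin N) : l i < q⁻¹ := by
  have key : ∀ k, l k ≠ 1 → l k + (l k)⁻¹ < ∑ k, l k := by
    intro k hk
    obtain ⟨j, hj⟩ := hs k
    rw [← hj]
    refine sum_aux hN l hl ?_
    rintro rfl
    have := hl k
    field_simp at hj
    exact hk (by nlinarith)
  have hqi : 1 ≤ q⁻¹ := (one_le_inv₀ hq0).2 hq1
  have two : 2 < ∑ k, l k := by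
    by_cases hc : ∀ k, l k = 1
    · simp only [hc, Finset.sum_const, Finset.card_univ, Fintype.card_fin, nsmul_eq_mul, mul_one]
      exact_mod_cast hN
    · push Not at hc
      obtain ⟨k, hk⟩ := hc
      refine lt_of_le_of_lt ?_ (key k hk)
      have := hl k
      have h2 := mul_inv_cancel₀ this.ne'
      have h3 := inv_pos.2 this
      nlinarith [sq_nonneg (l k - (l k)⁻¹)]
  by_contra! hc
  have hp := hl i
  have h2 := mul_inv_cancel₀ hp.ne'
  have h3 := inv_pos.2 hp
  have h4 := mul_inv_cancel₀ hq0.ne'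
  by_cases h1 : l i = 1
  · have h5 : q⁻¹ = 1 := by linarith
    linarith
  · have h6 := key i h1
    rw [← htr] at h6
    have h7 : (l i)⁻¹ ≤ q := by
      have := inv_anti₀ (by positivity) hc
      rwa [inv_inv] at this
    -- (l - q⁻¹) (1 - q / l) ≥ 0
    have h8 : (l i)⁻¹ * q ≤ 1 := by nlinarith
    have h9 : 0 ≤ (l i - q⁻¹) * (1 - (l i)⁻¹ * q) := mul_nonneg (by linarith) (by linarith)
    have h10 : (l i - q⁻¹) * (1 - (l i)⁻¹ * q) = l i + (l i)⁻¹ - (q + q⁻¹) := by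
      field_simp
      ring
    linarith

/-- If `N ≥ 3`, `F ∈ M_N(ℂ)` is positive definite with symmetric spectrum
(there is a unitary `U` with `U F U^* = F⁻¹`), and `q ∈ (0,1]` satisfies
`q + q⁻¹ = Tr(F)`, then `q⁻¹ > ‖F‖`, i.e. `q · ‖F‖ < 1`. -/
theorem q_mul_opNorm_lt_one (N : ℕ) (hN : 3 ≤ N)
    (F : Matrix (Fin N) (Fin N) ℂ) (hF : F.PosDef)
    (hsym : ∃ U ∈ Matrix.unitaryGroup (Fin N) ℂ, U * F * Uᴴ = F⁻¹)
    (q : ℝ) (hq0 : 0 < q) (hq1 : q ≤ 1) (htr : q + q⁻¹ = (F.trace).re) :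
    matOpNorm F < q⁻¹ ∧ q * matOpNorm F < 1 := by
  have key := real_aux hN hF.1.eigenvalues hF.eigenvalues_pos (exists_inv_eigenvalue hF hsym)
    q hq0 hq1 (by rw [htr, hF.1.trace_eq_sum_eigenvalues]; simp)
  have h := matOpNorm_lt hF.1 (inv_pos.2 hq0)
    (fun i => by rw [abs_of_pos (hF.eigenvalues_pos i)]; exact key i)
  refine ⟨h, ?_⟩
  calc q * matOpNorm F < q * q⁻¹ := mul_lt_mul_of_pos_left h hq0
    _ = 1 := mul_inv_cancel₀ hq0.ne'
end
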